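/- For all integers b ≥ 1 and c ≥ 1, the polynomials Q satisfy the q-difference equation E35: −w·z·(q^{4c}−1)·Q_{b+1,c−1}(x,y,z,w) − Q_{b,c}(x,y,z,q²w) − w·(q^{2b}−1)·q^{4c}·(q^{4(b+c−1)} − x·y²·z)·Q_{b−1,c}(x,y,z,w) + Q_{b,c}(x,y,z,w) = 0. -/

import Mathlib

noncomputable section

open MvPolynomial

/-- The field `K = ℚ(q)` of rational functions in `q` over `ℚ`. -/
abbrev K : Type := RatFunc ℚ

/-- The variable `q ∈ K = ℚ(q)`. -/
def q : K := RatFunc.X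

/-- The polynomial ring `K[x,y,z,w]`. -/
abbrev P4 : Type := MvPolynomial (Fin 4) K

def xP : P4 := X 0
def yP : P4 := X 1
def zP : P4 := X 2
def wP : P4 := X 3

/-- The `K`-algebra map `K[x,y,z,w] → K[x,y,z,w]` rescaling the variables:
`x ↦ q^a·x`, `y ↦ q^b·y`, `z ↦ q^c·z`, `w ↦ q^d·w`. -/
def scl (a b c d : ℤ) : P4 →ₐ[K] P4 :=
  aeval ![C (q ^ a) * X 0, C (q ^ b) * X 1, C (q ^ c) * X 2, C (q ^ d) * X 3]

/-- The polynomials `Q_{b,0}(x,y,z,w)`, defined by the recursion (rec1) of the paper. -/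
def Qb0 : ℕ → P4
  | 0 => 1
  | b + 1 =>
      C (q ^ (4 * (b : ℤ))) * wP * yP * (zP - 1) * scl 0 0 (-4) 0 (Qb0 b)
    + C (q ^ (4 * (b : ℤ))) * wP * xP * (yP - 1) * yP * zP * scl 0 (-2) 0 0 (Qb0 b)
    + C (q ^ (6 * (b : ℤ))) * (wP - 1) * (yP - 1) * scl 0 (-2) 0 (-2) (Qb0 b)
    + C (q ^ (4 * (b : ℤ))) * wP * (xP - 1) * yP * (zP - 1) * scl (-4) 2 (-4) 0 (Qb0 b)
    + C (q ^ (6 * (b : ℤ))) * (wP - 1) * (xP - 1) * yP * scl (-4) 0 0 (-2) (Qb0 b)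

/-- The polynomials `Q_{b,c}(x,y,z,w)`: for `c ≥ 1` they are defined by the
recursion (rec2) of the paper, lowering `c`; for `c = 0` by `Qb0`. -/
def Q : ℕ → ℕ → P4
  | b, 0 => Qb0 b
  | b, c + 1 =>
      - (C (q ^ (4 * (b : ℤ) + 8 * (c : ℤ))) * wP ^ 2 * yP * (zP - 1) * zP)
          * scl 0 0 (-4) 0 (Q b c)
    + (C (q ^ (4 * (b : ℤ) + 4 * (c : ℤ) - 2)) * wP * xP * (yP - 1) * zP)
          * (C (q ^ (2 * (b : ℤ) + 4 * (c : ℤ) + 4)) - C (q ^ (2 : ℤ)) * wP * yP * zP)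
          * scl 0 (-2) 0 0 (Q b c)
    - (C (q ^ (6 * (b : ℤ) + 8 * (c : ℤ))) * (wP - 1) * wP * (yP - 1) * zP)
          * scl 0 (-2) 0 (-2) (Q b c)
    + (C (q ^ (4 * (b : ℤ) + 8 * (c : ℤ) - 2)) * wP * (xP - 1) * (zP - 1))
          * (C (q ^ (2 * (b : ℤ) + 4 * (c : ℤ) + 4)) - C (q ^ (2 : ℤ)) * wP * yP * zP)
          * scl (-4) 2 (-4) 0 (Q b c)
    + (C (q ^ (6 * (b : ℤ) + 8 * (c : ℤ) - 2)) * (wP - 1) * (xP - 1))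
          * (C (q ^ (2 * (b : ℤ) + 4 * (c : ℤ) + 4)) - C (q ^ (2 : ℤ)) * wP * yP * zP)
          * scl (-4) 0 0 (-2) (Q b c)


/-! ### Basic facts on the rescaling maps -/

lemma q_ne : q ≠ 0 := RatFunc.X_ne_zero

lemma scl_x (a b c d : ℤ) : scl a b c d xP = C (q ^ a) * xP := by simp [scl, xP]
lemma scl_y (a b c d : ℤ) : scl a b c d yP = C (q ^ b) * yP := by simp [scl, yP]
lemma scl_z (a b c d : ℤ) : scl a b c d zP = C (q ^ c) * zP := by simp [scl, zP]
lemma scl_w (a b c d : ℤ) : scl a b c d wP = C (q ^ d) * wP := by simp [scl, wP]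

lemma scl_C (a b c d : ℤ) (k : K) : scl a b c d (C k) = C k := by
  simp [scl, MvPolynomial.algebraMap_eq]

lemma scl_scl (a b c d a' b' c' d' : ℤ) (f : P4) :
    scl a b c d (scl a' b' c' d' f) = scl (a + a') (b + b') (c + c') (d + d') f := by
  have h : (scl a b c d).comp (scl a' b' c' d') = scl (a + a') (b + b') (c + c') (d + d') := by
    apply MvPolynomial.algHom_ext
    intro i
    fin_cases i <;>
      simp [scl, MvPolynomial.algebraMap_eq, zpow_add₀ q_ne] <;> ring
  exact DFunLike.congr_fun h f

lemma scl_zero (f : P4) : scl 0 0 0 0 f = f := by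
  have h : scl 0 0 0 0 = AlgHom.id K P4 := by
    apply MvPolynomial.algHom_ext
    intro i
    fin_cases i <;> simp [scl]
  rw [h]; rfl

/-- the scalar `q ^ 2`, as a constant polynomial. -/
def A : P4 := C (q ^ 2)

lemma A_ne : A ≠ 0 := by
  unfold A
  rw [Ne, MvPolynomial.C_eq_zero]
  exact pow_ne_zero _ q_ne

lemma A_eq : A = C q ^ 2 := by unfold A; exact map_pow _ _ _

lemma w_ne : wP ≠ 0 := MvPolynomial.X_ne_zero _

/-- the scalar `q ^ (-2)`, as a constant polynomial. -/
def r : P4 := C (q ^ (-2 : ℤ))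

lemma A_r : A * r = 1 := by
  unfold A r
  rw [← C_mul, ← zpow_natCast, ← zpow_add₀ q_ne]; simp

lemma C_two : C (q ^ (2 : ℤ)) = A := by unfold A; norm_cast
lemma C_ntwo : C (q ^ (-2 : ℤ)) = r := rfl
lemma C_nfour : C (q ^ (-4 : ℤ)) = r ^ 2 := by
  unfold r; rw [← C_pow, ← zpow_natCast, ← zpow_mul]; norm_num
lemma C_zero' : C (q ^ (0 : ℤ)) = (1 : P4) := by simp

lemma scl_A (a b c d : ℤ) : scl a b c d A = A := scl_C _ _ _ _ _
lemma scl_r (a b c d : ℤ) : scl a b c d r = r := scl_C _ _ _ _ _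

/-- coordinates in which all rescaled variables are visibly polynomial -/
lemma coords : ∃ x y z w : P4, xP = A ^ 2 * x ∧ yP = A * y ∧ zP = A ^ 2 * z ∧ wP = A * w ∧
    r ^ 2 * (A ^ 2 * x) = x ∧ r * (A * y) = y ∧ r ^ 2 * (A ^ 2 * z) = z ∧ r * (A * w) = w := by
  have h := A_r
  have h2 : A ^ 2 * r ^ 2 = 1 := by rw [← mul_pow, h, one_pow]
  refine ⟨r ^ 2 * xP, r * yP, r ^ 2 * zP, r * wP, ?_, ?_, ?_, ?_, ?_, ?_, ?_, ?_⟩ <;>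
    simp only [← mul_assoc, h, h2, one_mul]

/-! ### The difference operators -/

/-- `x (y - 1) z Y⁻¹` -/
def u2 (f : P4) : P4 := xP * (yP - 1) * zP * scl 0 (-2) 0 0 f
/-- `(x - 1) (z - 1) X⁻¹ Y Z⁻¹` -/
def u3 (f : P4) : P4 := (xP - 1) * (zP - 1) * scl (-4) 2 (-4) 0 f
/-- `(x - 1) X⁻¹` -/
def v (f : P4) : P4 := (xP - 1) * scl (-4) 0 0 0 f
/-- `y (z - 1) Z⁻¹` -/
def U1 (f : P4) : P4 := yP * (zP - 1) * scl 0 0 (-4) 0 f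
/-- `(y - 1) Y⁻¹ + (x - 1) y X⁻¹` -/
def V (f : P4) : P4 := (yP - 1) * scl 0 (-2) 0 0 f + (xP - 1) * yP * scl (-4) 0 0 0 f
/-- rescaling of `w` by `q ^ 2` -/
def W (f : P4) : P4 := scl 0 0 0 2 f
/-- rescaling of `w` by `q ^ (-2)` -/
def Wi (f : P4) : P4 := scl 0 0 0 (-2) f

/-- the operator raising `b` -/
def opS (β γ : K) (f : P4) : P4 :=
  C γ * C β ^ 2 * (wP * (C γ * (U1 f + yP * u3 f) + yP * u2 f)
    + C γ * C β * (wP - 1) * V (Wi f))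

/-- the additional part of the operator raising `c` -/
def opT (β γ : K) (f : P4) : P4 :=
  A * C β ^ 3 * C γ ^ 2 * (wP * (u2 f + C γ * u3 f) + C β * C γ * (wP - 1) * v (Wi f))

/-- the operator raising `c` -/
def opR (β γ : K) (f : P4) : P4 := opT β γ f - wP * zP * opS β γ f

/-- first diagonal equation -/
def opF (β γ : K) (f : P4) : P4 :=
  C γ * C β ^ 2 * (f + V f) + C β * (C γ * (U1 (W f) + yP * u3 (W f)) + yP * u2 (W f))
    - xP * yP ^ 2 * zP * f

/-- second diagonal equation -/
def opJ (β γ : K) (f : P4) : P4 :=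
  wP * (u2 f + C γ * u3 f) + C β * C γ * ((wP - 1) * v (Wi f) + v f) - wP * zP * V f

/-- the operator intertwining `opS` with `opJ`, times `q ^ 2` -/
def opSJ (β γ : K) (f : P4) : P4 :=
  C γ * C β ^ 2 * (wP * (A ^ 2 * C γ * (U1 f + yP * u3 f) + yP * u2 f)
    + A ^ 2 * C γ * C β * (wP - 1) * V (Wi f))

/-- the operator intertwining `opR` with `opJ`, times `q ^ 2` -/
def opRJ (β γ : K) (f : P4) : P4 :=
  A ^ 2 * C β ^ 3 * C γ ^ 2 * (wP * (u2 f + A ^ 2 * C γ * u3 f)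
    + A ^ 2 * C β * C γ * (wP - 1) * v (Wi f)) - wP * zP * opSJ β γ f

set_option linter.unusedSimpArgs false

/-! ### Operator identities -/

set_option maxRecDepth 4000 in
set_option maxHeartbeats 1000000 in
lemma rec1_step (β γ : K) (f : P4) :
    opS β (q ^ 4 * γ) (opR β γ f) = opR (q ^ 2 * β) γ (opS β γ f) := by
  obtain ⟨x, y, z, w, hx, hy, hz, hw, hx', hy', hz', hw'⟩ := coords
  simp only [opR, opS, opT, opF, opJ, opSJ, opRJ, U1, u2, u3, v, V, W, Wi, map_add, map_sub, map_mul,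
    map_one, map_pow, map_zero, scl_C, scl_scl, scl_x, scl_y, scl_z, scl_w, scl_A]
  simp only [Int.reduceAdd, Int.reduceNeg, zero_add, add_zero, C_two, C_ntwo, C_nfour, C_zero',
    scl_zero, one_mul, hx, hy, hz, hw, hx', hy', hz', hw']
  simp only [A_eq]
  ring

set_option maxRecDepth 4000 in
set_option maxHeartbeats 1000000 in
lemma F_stepS (β γ : K) (f : P4) :
    opF (q ^ 2 * β) γ (opS β γ f) = A ^ 2 * opS β γ (opF β γ f) := by
  obtain ⟨x, y, z, w, hx, hy, hz, hw, hx', hy', hz', hw'⟩ := coords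
  simp only [opR, opS, opT, opF, opJ, opSJ, opRJ, U1, u2, u3, v, V, W, Wi, map_add, map_sub, map_mul,
    map_one, map_pow, map_zero, scl_C, scl_scl, scl_x, scl_y, scl_z, scl_w, scl_A]
  simp only [Int.reduceAdd, Int.reduceNeg, zero_add, add_zero, C_two, C_ntwo, C_nfour, C_zero',
    scl_zero, one_mul, hx, hy, hz, hw, hx', hy', hz', hw']
  simp only [A_eq]
  ring

set_option maxRecDepth 4000 in
set_option maxHeartbeats 1000000 in
lemma F_stepR (β γ : K) (f : P4) :
    opF β (q ^ 4 * γ) (opR β γ f) = A ^ 2 * opR β γ (opF β γ f) := by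
  obtain ⟨x, y, z, w, hx, hy, hz, hw, hx', hy', hz', hw'⟩ := coords
  simp only [opR, opS, opT, opF, opJ, opSJ, opRJ, U1, u2, u3, v, V, W, Wi, map_add, map_sub, map_mul,
    map_one, map_pow, map_zero, scl_C, scl_scl, scl_x, scl_y, scl_z, scl_w, scl_A]
  simp only [Int.reduceAdd, Int.reduceNeg, zero_add, add_zero, C_two, C_ntwo, C_nfour, C_zero',
    scl_zero, one_mul, hx, hy, hz, hw, hx', hy', hz', hw']
  simp only [A_eq]
  ring

set_option maxRecDepth 4000 in
set_option maxHeartbeats 1000000 in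
lemma J_stepS (β γ : K) (f : P4) :
    A * opJ (q ^ 2 * β) γ (opS β γ f) = opSJ β γ (opJ β γ f) := by
  obtain ⟨x, y, z, w, hx, hy, hz, hw, hx', hy', hz', hw'⟩ := coords
  simp only [opR, opS, opT, opF, opJ, opSJ, opRJ, U1, u2, u3, v, V, W, Wi, map_add, map_sub, map_mul,
    map_one, map_pow, map_zero, scl_C, scl_scl, scl_x, scl_y, scl_z, scl_w, scl_A]
  simp only [Int.reduceAdd, Int.reduceNeg, zero_add, add_zero, C_two, C_ntwo, C_nfour, C_zero',
    scl_zero, one_mul, hx, hy, hz, hw, hx', hy', hz', hw']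
  simp only [A_eq]
  ring

set_option maxRecDepth 4000 in
set_option maxHeartbeats 1000000 in
lemma J_stepR (β γ : K) (f : P4) :
    A * opJ β (q ^ 4 * γ) (opR β γ f) = opRJ β γ (opJ β γ f) := by
  obtain ⟨x, y, z, w, hx, hy, hz, hw, hx', hy', hz', hw'⟩ := coords
  simp only [opR, opS, opT, opF, opJ, opSJ, opRJ, U1, u2, u3, v, V, W, Wi, map_add, map_sub, map_mul,
    map_one, map_pow, map_zero, scl_C, scl_scl, scl_x, scl_y, scl_z, scl_w, scl_A]
  simp only [Int.reduceAdd, Int.reduceNeg, zero_add, add_zero, C_two, C_ntwo, C_nfour, C_zero',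
    scl_zero, one_mul, hx, hy, hz, hw, hx', hy', hz', hw']
  simp only [A_eq]
  ring

set_option maxRecDepth 4000 in
set_option maxHeartbeats 1000000 in
lemma E_base_step (δ : K) (f P : P4)
    (hF : opF (q ^ 2 * δ) 1 f = 0)
    (h1 : f - W f = wP * (C δ ^ 2 - xP * yP ^ 2 * zP) * P)
    (h4 : opS δ 1 P = (C (q ^ 2 * δ) - 1) * f) :
    opS (q ^ 2 * δ) 1 f - W (opS (q ^ 2 * δ) 1 f) =
      wP * (C (q ^ 2 * (q ^ 2 * δ)) - 1) * (C (q ^ 2 * δ) ^ 2 - xP * yP ^ 2 * zP) * f := by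
  have k1 := congrArg (opS (q ^ 2 * δ) 1) h1
  obtain ⟨x, y, z, w, hx, hy, hz, hw, hx', hy', hz', hw'⟩ := coords
  simp only [opR, opS, opT, opF, opJ, opSJ, opRJ, U1, u2, u3, v, V, W, Wi, map_add, map_sub, map_mul,
    map_one, map_pow, map_zero, scl_C, scl_scl, scl_x, scl_y, scl_z, scl_w, scl_A] at k1 h4 hF ⊢
  simp only [Int.reduceAdd, Int.reduceNeg, zero_add, add_zero, C_two, C_ntwo, C_nfour, C_zero',
    scl_zero, one_mul, hx, hy, hz, hw, hx', hy', hz', hw'] at k1 h4 hF ⊢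
  simp only [A_eq] at k1 h4 hF ⊢
  linear_combination k1 + (C q ^ 2 * w) * ((C q ^ 2 * C δ) ^ 2
    - (C q ^ 2) ^ 2 * x * (C q ^ 2 * y) ^ 2 * ((C q ^ 2) ^ 2 * z)) * h4
    - (C q ^ 2 - 1) * (C q ^ 2 * C δ) * (C q ^ 2 * w) * hF

set_option maxRecDepth 4000 in
set_option maxHeartbeats 1000000 in
lemma E_step (δ ε : K) (f P N M X : P4)
    (hF : opF (q ^ 2 * δ) (q ^ 4 * ε) f = 0)
    (hJ : opJ (q ^ 2 * δ) (q ^ 4 * ε) f = 0)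
    (h1 : f - W f = wP * zP * N + wP * C (q ^ 4 * ε)
      * (C δ ^ 2 * C (q ^ 4 * ε) - xP * yP ^ 2 * zP) * P)
    (h2 : opS (q ^ 2 * δ) (q ^ 4 * ε) f - W (opS (q ^ 2 * δ) (q ^ 4 * ε) f) =
      wP * zP * M + wP * (C (q ^ 2 * (q ^ 2 * δ)) - 1) * C (q ^ 4 * ε)
      * (C (q ^ 2 * δ) ^ 2 * C (q ^ 4 * ε) - xP * yP ^ 2 * zP) * f)
    (h3 : (C (q ^ 4 * ε) - 1) * opS (q ^ 2 * δ) (q ^ 4 * ε) f =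
      opT (q ^ 2 * (q ^ 2 * δ)) ε N - wP * zP * M)
    (h5 : X = opT δ (q ^ 4 * ε) P - wP * zP * ((C (q ^ 2 * δ) - 1) * f)) :
    opR (q ^ 2 * δ) (q ^ 4 * ε) f - W (opR (q ^ 2 * δ) (q ^ 4 * ε) f) =
      wP * zP * ((C (q ^ 4 * (q ^ 4 * ε)) - 1) * opS (q ^ 2 * δ) (q ^ 4 * ε) f)
      + wP * C (q ^ 4 * (q ^ 4 * ε))
        * (C δ ^ 2 * C (q ^ 4 * (q ^ 4 * ε)) - xP * yP ^ 2 * zP) * X := by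
  have k1 := congrArg (opT (q ^ 2 * δ) (q ^ 4 * ε)) h1
  obtain ⟨x, y, z, w, hx, hy, hz, hw, hx', hy', hz', hw'⟩ := coords
  simp only [opR, opS, opT, opF, opJ, opSJ, opRJ, U1, u2, u3, v, V, W, Wi, map_add, map_sub, map_mul,
    map_one, map_pow, map_zero, scl_C, scl_scl, scl_x, scl_y, scl_z, scl_w, scl_A] at k1 h2 h3 h5 hF hJ ⊢
  simp only [Int.reduceAdd, Int.reduceNeg, zero_add, add_zero, C_two, C_ntwo, C_nfour, C_zero',
    scl_zero, one_mul, hx, hy, hz, hw, hx', hy', hz', hw'] at k1 h2 h3 h5 hF hJ ⊢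
  simp only [A_eq] at k1 h2 h3 h5 hF hJ ⊢
  linear_combination C q ^ 2 * k1
    - C q ^ 2 * (C q ^ 2 - 1) * (C q ^ 2 * C δ) ^ 3 * (C q ^ 4 * C ε) ^ 2 * hJ
    - C q ^ 4 * (C q ^ 2 - 1) * (C q ^ 2 * C δ) * (C q ^ 4 * C ε) * (C q ^ 4 * z)
      * (C q ^ 2 * w) ^ 2 * hF
    - C q ^ 4 * (C q ^ 4 * z) * (C q ^ 2 * w) * (h2 + h3)
    - (C q ^ 2 * w) * C q ^ 4 * (C q ^ 4 * C ε) * ((C q ^ 2 * C δ) ^ 2 * (C q ^ 4 * C ε)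
      - C q ^ 4 * x * (C q ^ 2 * y) ^ 2 * (C q ^ 4 * z)) * h5

/-! ### The recursions in operator form -/

lemma opS_zero (β γ : K) : opS β γ 0 = 0 := by simp [opS, U1, u2, u3, V, Wi]
lemma opT_zero (β γ : K) : opT β γ 0 = 0 := by simp [opT, u2, u3, v, Wi]

lemma opS_C_mul (β γ k : K) (f : P4) : opS β γ (C k * f) = C k * opS β γ f := by
  simp only [opS, U1, u2, u3, V, Wi, map_mul, scl_C]; ring
lemma opT_C_mul (β γ k : K) (f : P4) : opT β γ (C k * f) = C k * opT β γ f := by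
  simp only [opT, u2, u3, v, Wi, map_mul, scl_C]; ring

lemma opF_one : opF 1 1 1 = 0 := by
  simp only [opF, U1, u2, u3, V, W, map_one]; ring
lemma opJ_one : opJ 1 1 1 = 0 := by
  simp only [opJ, u2, u3, V, v, Wi, map_one]; ring

lemma C_zpow_bc (b c : ℕ) (i j k : ℕ) :
    (C (q ^ (2 * (i : ℤ) * b + 4 * (j : ℤ) * c + 2 * (k : ℤ))) : P4)
      = C (q ^ (2 * b)) ^ i * C (q ^ (4 * c)) ^ j * A ^ k := by
  unfold A
  simp only [← C_pow, ← C_mul]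
  congr 1
  rw [← pow_mul, ← pow_mul, ← pow_mul, ← pow_add, ← pow_add, ← zpow_natCast]
  congr 1
  push_cast
  ring

lemma Q_zero_succ (b : ℕ) : Q (b + 1) 0 = opS (q ^ (2 * b)) 1 (Q b 0) := by
  have e1 := C_zpow_bc b 0 2 0 0
  have e2 := C_zpow_bc b 0 3 0 0
  norm_num at e1 e2
  simp only [Q, Qb0, opS, U1, u2, u3, V, Wi, scl_scl]
  norm_num
  rw [e1, e2]
  ring

lemma Q_succ (b c : ℕ) : Q b (c + 1) = opR (q ^ (2 * b)) (q ^ (4 * c)) (Q b c) := by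
  have e1 := C_zpow_bc b c 2 2 0
  have e2 := C_zpow_bc b c 1 1 2
  have e3 := C_zpow_bc b c 3 2 0
  have d1 : (C (q ^ (4 * (b : ℤ) + 4 * (c : ℤ) - 2)) : P4) = C (q ^ (2 * b)) ^ 2
      * C (q ^ (4 * c)) * r := by
    have := C_zpow_bc b c 2 1 0
    norm_num at this
    rw [sub_eq_add_neg, zpow_add₀ q_ne, C_mul, this]; simp [r]
  have d2 : (C (q ^ (4 * (b : ℤ) + 8 * (c : ℤ) - 2)) : P4) = C (q ^ (2 * b)) ^ 2
      * C (q ^ (4 * c)) ^ 2 * r := by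
    have := C_zpow_bc b c 2 2 0
    norm_num at this
    rw [sub_eq_add_neg, zpow_add₀ q_ne, C_mul, this]; simp [r]
  have d3 : (C (q ^ (6 * (b : ℤ) + 8 * (c : ℤ) - 2)) : P4) = C (q ^ (2 * b)) ^ 3
      * C (q ^ (4 * c)) ^ 2 * r := by
    have := C_zpow_bc b c 3 2 0
    norm_num at this
    rw [sub_eq_add_neg, zpow_add₀ q_ne, C_mul, this]; simp [r]
  norm_num at e1 e2 e3
  have hr := A_r
  simp only [Q, opR, opT, opS, U1, u2, u3, v, V, Wi, scl_scl, d1, d2, d3, C_two]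
  norm_num
  rw [e1, e2, e3]
  generalize (C q : P4) ^ (2 * b) = B
  generalize (C q : P4) ^ (4 * c) = G
  generalize scl 0 (-2) 0 0 (Q b c) = f1
  generalize scl 0 0 (-4) 0 (Q b c) = f2
  generalize scl (-4) 2 (-4) 0 (Q b c) = f3
  generalize scl 0 (-2) 0 (-2) (Q b c) = f4
  generalize scl (-4) 0 0 (-2) (Q b c) = f5
  linear_combination (A * B * G - wP * yP * zP) * (B ^ 2 * G * wP * xP * (yP - 1) * zP * f1
    + B ^ 2 * G ^ 2 * wP * (xP - 1) * (zP - 1) * f3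
    + B ^ 3 * G ^ 2 * (wP - 1) * (xP - 1) * f5) * hr

lemma pow_b (b : ℕ) : q ^ (2 * (b + 1)) = q ^ 2 * q ^ (2 * b) := by ring
lemma pow_c (c : ℕ) : q ^ (4 * (c + 1)) = q ^ 4 * q ^ (4 * c) := by ring

/-! ### First recursion for all `c`, and the two diagonal equations -/

lemma opS_zero_arg {β γ : K} {f : P4} (h : f = 0) : opS β γ f = 0 := by rw [h, opS_zero]

lemma opSJ_zero (β γ : K) : opSJ β γ 0 = 0 := by simp [opSJ, U1, u2, u3, V, Wi]
lemma opRJ_zero (β γ : K) : opRJ β γ 0 = 0 := by simp [opRJ, opSJ_zero, u2, u3, v, Wi]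
lemma opR_zero (β γ : K) : opR β γ 0 = 0 := by simp [opR, opT_zero, opS_zero]

lemma Q_rec1 (c : ℕ) : ∀ b, Q (b + 1) c = opS (q ^ (2 * b)) (q ^ (4 * c)) (Q b c) := by
  induction c with
  | zero => intro b; rw [Q_zero_succ]; simp
  | succ c ih =>
    intro b
    rw [Q_succ (b + 1) c, ih b, pow_b, ← rec1_step, ← pow_c, ← Q_succ]

lemma Q_F (c : ℕ) : ∀ b, opF (q ^ (2 * b)) (q ^ (4 * c)) (Q b c) = 0 := by
  induction c with
  | zero =>
    intro b
    induction b with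
    | zero => simpa [Q, Qb0] using opF_one
    | succ b ih => rw [Q_rec1, pow_b, F_stepS, ih, opS_zero, mul_zero]
  | succ c ih => intro b; rw [Q_succ, pow_c, F_stepR, ih, opR_zero, mul_zero]

lemma Q_J (c : ℕ) : ∀ b, opJ (q ^ (2 * b)) (q ^ (4 * c)) (Q b c) = 0 := by
  induction c with
  | zero =>
    intro b
    induction b with
    | zero => simpa [Q, Qb0] using opJ_one
    | succ b ih =>
      apply mul_left_cancel₀ A_ne
      rw [Q_rec1, pow_b, J_stepS, ih, opSJ_zero, mul_zero]
  | succ c ih =>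
    intro b
    apply mul_left_cancel₀ A_ne
    rw [Q_succ, pow_c, J_stepR, ih, opRJ_zero, mul_zero]

/-! ### The equation E35 -/

/-- `q ^ (2 b - 2)` -/
def del (b : ℕ) : K := q ^ (2 * (b : ℤ) - 2)
/-- `q ^ (4 c - 4)` -/
def eps (c : ℕ) : K := q ^ (4 * (c : ℤ) - 4)

lemma q2_del (b : ℕ) : q ^ 2 * del b = q ^ (2 * b) := by
  unfold del
  rw [← zpow_natCast, ← zpow_natCast, ← zpow_add₀ q_ne]; congr 1; push_cast; ring
lemma q4_eps (c : ℕ) : q ^ 4 * eps c = q ^ (4 * c) := by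
  unfold eps
  rw [← zpow_natCast, ← zpow_natCast, ← zpow_add₀ q_ne]; congr 1; push_cast; ring
lemma del_succ (b : ℕ) : del (b + 1) = q ^ (2 * b) := by
  unfold del
  rw [← zpow_natCast]; congr 1; push_cast; ring
lemma eps_succ (c : ℕ) : eps (c + 1) = q ^ (4 * c) := by
  unfold eps
  rw [← zpow_natCast]; congr 1; push_cast; ring

/-- `(q ^ (4 c) - 1) Q_{b+1,c-1}` -/
def Nn (b c : ℕ) : P4 := C (q ^ (4 * c) - 1) * Q (b + 1) (c - 1)
/-- `(q ^ (2 b) - 1) Q_{b-1,c}` -/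
def Pp (b c : ℕ) : P4 := C (q ^ (2 * b) - 1) * Q (b - 1) c

lemma Nn_zero (b : ℕ) : Nn b 0 = 0 := by simp [Nn]
lemma Pp_zero (c : ℕ) : Pp 0 c = 0 := by simp [Pp]

lemma opS_Pp (b c : ℕ) : opS (del b) (q ^ (4 * c)) (Pp b c) = C (q ^ (2 * b) - 1) * Q b c := by
  cases b with
  | zero => simp [Pp_zero, opS_zero]
  | succ b => rw [Pp, opS_C_mul, del_succ, Nat.add_sub_cancel, Q_rec1]

lemma Pp_succ (b c : ℕ) : Pp b (c + 1) = opT (del b) (q ^ (4 * c)) (Pp b c)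
    - wP * zP * (C (q ^ (2 * b) - 1) * Q b c) := by
  cases b with
  | zero => simp [Pp_zero, opT_zero]
  | succ b =>
    rw [Pp, Pp, opT_C_mul, del_succ, Nat.add_sub_cancel, Q_rec1, Q_succ, opR]
    ring

lemma Nn_rel (b c : ℕ) : C (q ^ (4 * c) - 1) * Q (b + 1) c =
    opT (q ^ (2 * (b + 1))) (eps c) (Nn b c) - wP * zP * Nn (b + 1) c := by
  cases c with
  | zero => simp [Nn_zero, opT_zero]
  | succ c =>
    rw [Nn, Nn, opT_C_mul, eps_succ, Nat.add_sub_cancel, Q_rec1 c (b + 1), Q_succ, opR]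
    ring

lemma E35_zero (b : ℕ) : Q b 0 - W (Q b 0) =
    wP * (C (del b) ^ 2 - xP * yP ^ 2 * zP) * Pp b 0 := by
  induction b with
  | zero => simp [Pp_zero, Q, Qb0, W]
  | succ b ih =>
    have hF := Q_F 0 b
    have h4 := opS_Pp b 0
    simp only [mul_zero, pow_zero] at hF h4
    have h := E_base_step (del b) (Q b 0) (Pp b 0) (by rwa [q2_del]) ih
      (by rw [q2_del, h4, C_sub, C_1])
    rw [q2_del, ← Q_zero_succ] at h
    rw [h, Pp, del_succ, Nat.add_sub_cancel, pow_b, C_sub, C_1]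
    ring

lemma E35_all (c : ℕ) : ∀ b, Q b c - W (Q b c) = wP * zP * Nn b c
    + wP * C (q ^ (4 * c)) * (C (del b) ^ 2 * C (q ^ (4 * c)) - xP * yP ^ 2 * zP) * Pp b c := by
  induction c with
  | zero =>
    intro b
    rw [E35_zero, Nn_zero]
    simp
  | succ c ih =>
    intro b
    have h2 := ih (b + 1)
    have h3 := Nn_rel b c
    have h5 := Pp_succ b c
    rw [Pp, del_succ, Nat.add_sub_cancel, Q_rec1] at h2
    rw [Q_rec1] at h3
    have h := E_step (del b) (eps c) (Q b c) (Pp b c) (Nn b c) (Nn (b + 1) c) (Pp b (c + 1))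
      (by rw [q2_del, q4_eps]; exact Q_F c b) (by rw [q2_del, q4_eps]; exact Q_J c b)
      (by rw [q4_eps]; exact ih b)
      (by rw [q2_del, q4_eps, h2, pow_b, C_sub, C_1]; ring)
      (by rw [q2_del, q4_eps, ← pow_b, ← h3, C_sub, C_1])
      (by rw [q2_del, q4_eps, h5, C_sub, C_1])
    rw [q2_del, q4_eps, ← Q_succ, ← pow_c, ← Q_rec1] at h
    rw [h, Nn, Nat.add_sub_cancel, C_sub, C_1]

/-- the q-difference equation E35, for `b ≥ 1`, `c ≥ 1`. -/
theorem Q_E35 (b c : ℕ) (hb : 1 ≤ b) (hc : 1 ≤ c) :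
    - C (q ^ (4 * c) - 1) * wP * zP * Q (b + 1) (c - 1)
    - scl 0 0 0 2 (Q b c)
    - C ((q ^ (2 * b) - 1) * q ^ (4 * c)) * wP
        * (C (q ^ (4 * (b + c - 1))) - xP * yP ^ 2 * zP) * Q (b - 1) c
    + Q b c = 0 := by
  have h := E35_all c b
  obtain ⟨b, rfl⟩ : ∃ b', b = b' + 1 := ⟨b - 1, by omega⟩
  have e : (C (q ^ (4 * (b + 1 + c - 1))) : P4) = C (del (b + 1)) ^ 2 * C (q ^ (4 * c)) := by
    rw [del_succ, ← C_pow, ← C_mul, ← pow_mul, ← pow_add]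
    congr 2
    omega
  rw [Nn, Pp, W] at h
  rw [e, C_mul]
  linear_combination h
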